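/- Every symmetric unimodal probability distribution on ℝ supported in [−2a, 2a] with a density can be represented as the distribution of U₁ + U₂ where U₁ and U₂ are each uniformly distributed on [−a, a] with some joint dependence structure (copula). In particular, for density version: if μ is a symmetric (about 0) unimodal probability measure on [−2a,2a], then there exist random variables U₁, U₂, each uniform on [−a,a], with U₁ + U₂ ∼ μ. -/

import Mathlib

open MeasureTheory

/-- The uniform probability measure on `[-a, a]`. -/
noncomputable def unif (a : ℝ) : Measure ℝ :=
  (ENNReal.ofReal (2 * a))⁻¹ • volume.restrict (Set.Icc (-a) a)

/-!
Let `U` be uniform on `[-a, a]` and `0 ≤ h ≤ 2a`. Move `U` to the right by `h`, reflecting at `a`,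
and let `V` be minus the result. After multiplication of both by a common fair sign, `U` and `V`
are uniform, and `|U + V|` has the law of `min Z h` with `Z` uniform on `[0, 2a]`: it exceeds
`s ≥ 0` with probability `1 - s / (2a)` if `s < h`, and never otherwise. Drawing `h` from a law `π`
on `[0, 2a]` therefore gives a symmetric sum with tail `P(|U + V| > s) = (1 - s / (2a)) π(s, ∞)`.

A symmetric law is determined by the tail of its absolute value, so it remains to solve
`μ {x | s < |x|} = (1 - s / (2a)) π(s, ∞)` for `π`. If `F` is the distribution function of `|x|`
under `μ`, the required `π(s, ∞)` is `2a` times the slope of the chord of `F` between `s` and `2a`,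
and this slope decreases in `s` because `F` is concave.
-/

open Set Filter Topology ENNReal

section Symmetrization

/-- The symmetrization of a measure `m` on `G`: the average of `m` and its image under negation,
that is, the law of `ε X` for `X` of law `m` and an independent fair sign `ε`. -/
noncomputable def symmetrization {G : Type*} [MeasurableSpace G] [Neg G] (m : Measure G) :
    Measure G :=
  (2⁻¹ : ℝ≥0∞) • (m + m.neg)

variable {G H : Type*} [MeasurableSpace G] [MeasurableSpace H] [InvolutiveNeg G] [MeasurableNeg G]

lemma symmetrization_apply (m : Measure G) (s : Set G) :
    symmetrization m s = 2⁻¹ * (m s + m (-s)) := by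
  simp [symmetrization, Measure.neg_apply, mul_add]

lemma symmetrization_eq_self (m : Measure G) [m.IsNegInvariant] : symmetrization m = m := by
  ext s
  rw [symmetrization_apply, Measure.measure_neg, ← two_mul, ← mul_assoc,
    ENNReal.inv_mul_cancel two_ne_zero ofNat_ne_top, one_mul]

instance isProbabilityMeasure_symmetrization (m : Measure G) [IsProbabilityMeasure m] :
    IsProbabilityMeasure (symmetrization m) where
  measure_univ := by
    simp [symmetrization_apply, one_add_one_eq_two, ENNReal.inv_mul_cancel]

lemma map_symmetrization [InvolutiveNeg H] [MeasurableNeg H] {f : G → H} (hf : Measurable f)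
    (hodd : ∀ x, f (-x) = -f x) (m : Measure G) :
    (symmetrization m).map f = symmetrization (m.map f) := by
  ext s hs
  have hpre : f ⁻¹' (-s) = -(f ⁻¹' s) := by ext x; simp [hodd]
  rw [Measure.map_apply hf hs, symmetrization_apply, symmetrization_apply, Measure.map_apply hf hs,
    Measure.map_apply hf hs.neg, hpre]

lemma symmetrization_map_prod_eq {α β : Type*} [MeasurableSpace α] [MeasurableSpace β]
    {π : Measure α} [IsProbabilityMeasure π] {m : Measure β} [SFinite m] {f : α × β → G}
    (hf : Measurable f) {ν : Measure G}
    (h : ∀ᵐ x ∂π, symmetrization (m.map fun y => f (x, y)) = ν) :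
    symmetrization ((π.prod m).map f) = ν := by
  have map_apply (x : α) {t : Set G} (ht : MeasurableSet t) :
      m.map (fun y => f (x, y)) t = m (Prod.mk x ⁻¹' (f ⁻¹' t)) :=
    Measure.map_apply (by fun_prop) ht
  have map_prod_apply {t : Set G} (ht : MeasurableSet t) :
      (π.prod m).map f t = ∫⁻ x, m.map (fun y => f (x, y)) t ∂π := by
    simp only [map_apply _ ht, Measure.map_apply hf ht, Measure.prod_apply (hf ht)]
  ext s hs
  have hmeas : Measurable fun x => m.map (fun y => f (x, y)) s := by
    simpa only [map_apply _ hs] using measurable_measure_prodMk_left (hf hs)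
  calc symmetrization ((π.prod m).map f) s
      = ∫⁻ x, symmetrization (m.map fun y => f (x, y)) s ∂π := by
        simp only [symmetrization_apply]
        rw [map_prod_apply hs, map_prod_apply hs.neg, lintegral_const_mul' _ _ (by simp),
          lintegral_add_left hmeas]
    _ = ∫⁻ _, ν s ∂π := lintegral_congr_ae (h.mono fun x hx => by simp only [hx])
    _ = ν s := by simp

lemma symmetrization_map_abs (m : Measure ℝ) :
    symmetrization (m.map fun x => |x|) = symmetrization m := by
  refine Measure.ext_of_lintegral _ fun φ hφ => ?_
  have lintegral_symmetrization (m : Measure ℝ) :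
      ∫⁻ x, φ x ∂symmetrization m = 2⁻¹ * ∫⁻ x, (φ x + φ (-x)) ∂m := by
    rw [symmetrization, lintegral_smul_measure, lintegral_add_measure, Measure.neg,
      lintegral_map hφ measurable_neg, lintegral_add_left hφ, smul_eq_mul]
  rw [lintegral_symmetrization, lintegral_symmetrization, lintegral_map (by fun_prop) (by fun_prop)]
  congr! 3 with x
  rcases abs_choice x with h | h <;> simp [h, add_comm]

lemma symmetrization_eq_of_measure_lt_abs_eq {m m' : Measure ℝ} [IsProbabilityMeasure m]
    [IsProbabilityMeasure m'] (h : ∀ s, 0 ≤ s → m {x | s < |x|} = m' {x | s < |x|}) :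
    symmetrization m = symmetrization m' := by
  have hmeas (s : ℝ) : MeasurableSet {x : ℝ | s < |x|} :=
    measurableSet_lt measurable_const (by fun_prop)
  have hpre (s : ℝ) : (fun x : ℝ => |x|) ⁻¹' Iic s = {x | s < |x|}ᶜ := by
    ext; simp
  rw [← symmetrization_map_abs m, ← symmetrization_map_abs m']
  congr 1
  refine Measure.ext_of_Iic _ _ fun s => ?_
  rw [Measure.map_apply (by fun_prop) measurableSet_Iic,
    Measure.map_apply (by fun_prop) measurableSet_Iic, hpre, prob_compl_eq_one_sub (hmeas s),
    prob_compl_eq_one_sub (hmeas s)]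
  rcases le_or_gt 0 s with hs | hs
  · rw [h s hs]
  · have huniv : {x : ℝ | s < |x|} = univ := eq_univ_of_forall fun x => hs.trans_le (abs_nonneg x)
    simp [huniv]

end Symmetrization

section Uniform

lemma isProbabilityMeasure_unif {a : ℝ} (ha : 0 < a) : IsProbabilityMeasure (unif a) where
  measure_univ := by
    rw [unif, Measure.smul_apply, Measure.restrict_apply_univ, Real.volume_Icc, smul_eq_mul,
      show a - -a = 2 * a by ring]
    exact ENNReal.inv_mul_cancel (by simpa using ha) ofReal_ne_top

lemma map_const_sub_restrict_Icc (c p q : ℝ) :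
    (volume.restrict (Icc p q)).map (fun x => c - x) = volume.restrict (Icc (c - q) (c - p)) := by
  have h := (Measure.measurePreserving_sub_left volume c).restrict_preimage
    (measurableSet_Icc (a := c - q) (b := c - p))
  simpa using h.map_eq

lemma map_sub_const_restrict_Icc (c p q : ℝ) :
    (volume.restrict (Icc p q)).map (fun x => x - c) = volume.restrict (Icc (p - c) (q - c)) := by
  have h := (measurePreserving_sub_right volume c).restrict_preimage
    (measurableSet_Icc (a := p - c) (b := q - c))
  simpa using h.map_eq

lemma restrict_Icc_eq_add {p q r : ℝ} (hpq : p ≤ q) (hqr : q ≤ r) :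
    (volume : Measure ℝ).restrict (Icc p r) =
      volume.restrict (Icc p q) + volume.restrict (Icc q r) := by
  rw [← Icc_union_Ioc_eq_Icc hpq hqr, Measure.restrict_union _ measurableSet_Ioc,
    restrict_Ioc_eq_restrict_Icc]
  exact Set.disjoint_left.2 fun x hx hx' => hx'.1.not_ge hx.2

instance isNegInvariant_unif (a : ℝ) : (unif a).IsNegInvariant where
  neg_eq_self := by
    have h := map_const_sub_restrict_Icc 0 (-a) a
    simp only [zero_sub, sub_neg_eq_add, zero_add] at h
    rw [unif, Measure.neg, Measure.map_smul]
    exact congrArg _ h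

lemma map_abs_add_sub_restrict_Icc {a d : ℝ} (hd : d ∈ Icc (-a) a) :
    (volume.restrict (Icc (-a) a)).map (fun u => |u + d| - a) =
      volume.restrict (Icc (-a) (-d)) + volume.restrict (Icc (-a) d) := by
  obtain ⟨hd₁, hd₂⟩ := hd
  have hleft : (volume.restrict (Icc (-a) (-d))).map (fun u => |u + d| - a) =
      volume.restrict (Icc (-a) (-d)) := by
    rw [Measure.map_congr (g := fun u => -(a + d) - u), map_const_sub_restrict_Icc]
    · congr 2 <;> ring
    · filter_upwards [ae_restrict_mem measurableSet_Icc] with u hu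
      rw [abs_of_nonpos (by linarith [hu.2])]
      ring
  have hright : (volume.restrict (Icc (-d) a)).map (fun u => |u + d| - a) =
      volume.restrict (Icc (-a) d) := by
    rw [Measure.map_congr (g := fun u => u - (a - d)), map_sub_const_restrict_Icc]
    · congr 2 <;> ring
    · filter_upwards [ae_restrict_mem measurableSet_Icc] with u hu
      rw [abs_of_nonneg (by linarith [hu.1])]
      ring
  rw [restrict_Icc_eq_add (q := -d) (by linarith) (by linarith),
    Measure.map_add _ _ (by fun_prop), hleft, hright]

lemma symmetrization_map_abs_add_sub_unif {a d : ℝ} (hd : d ∈ Icc (-a) a) :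
    symmetrization ((unif a).map fun u => |u + d| - a) = unif a := by
  have hneg : ((volume.restrict (Icc (-a) a)).map (fun u => |u + d| - a)).neg =
      volume.restrict (Icc d a) + volume.restrict (Icc (-d) a) := by
    have hmap (p q : ℝ) := map_const_sub_restrict_Icc 0 p q
    simp only [zero_sub] at hmap
    rw [map_abs_add_sub_restrict_Icc hd, Measure.neg, Measure.map_add _ _ measurable_neg]
    simpa using congrArg₂ (· + ·) (hmap (-a) (-d)) (hmap (-a) d)
  have hsum : volume.restrict (Icc (-a) (-d)) + volume.restrict (Icc (-a) d) +
      (volume.restrict (Icc d a) + volume.restrict (Icc (-d) a)) =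
      (2 : ℝ≥0∞) • (volume : Measure ℝ).restrict (Icc (-a) a) := by
    rw [two_smul, add_comm (volume.restrict (Icc d a)), add_add_add_comm,
      ← restrict_Icc_eq_add (by linarith [hd.2]) (by linarith [hd.1]),
      ← restrict_Icc_eq_add hd.1 hd.2]
  rw [unif, symmetrization, Measure.map_smul, Measure.neg, Measure.map_smul, ← smul_add,
    ← Measure.neg, hneg, map_abs_add_sub_restrict_Icc hd, hsum, smul_comm, smul_smul _ 2,
    ENNReal.inv_mul_cancel two_ne_zero ofNat_ne_top, one_smul]

lemma volume_abs_coupling_sum_le {a h s : ℝ} (hsh : s < h) (hh : h ≤ 2 * a) :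
    volume ({u | |u + (|u + (h - a)| - a)| ≤ s} ∩ Icc (-a) a) = ENNReal.ofReal s := by
  have hset : {u | |u + (|u + (h - a)| - a)| ≤ s} ∩ Icc (-a) a =
      Icc (a - (h + s) / 2) (a - (h - s) / 2) := by
    ext u
    simp only [mem_inter_iff, mem_ofPred_eq, mem_Icc, abs_le]
    rcases abs_cases (u + (h - a)) with ⟨hu, _⟩ | ⟨hu, _⟩ <;> rw [hu] <;> constructor <;> grind
  rw [hset, Real.volume_Icc]
  congr 1
  ring

lemma unif_lt_abs_coupling_sum {a s h : ℝ} (ha : 0 < a) (hs : 0 ≤ s) (hh : h ∈ Icc 0 (2 * a)) :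
    unif a {u | s < |u + (|u + (h - a)| - a)|} =
      (Ioi s).indicator (fun _ => ENNReal.ofReal (1 - s / (2 * a))) h := by
  have : IsProbabilityMeasure (unif a) := isProbabilityMeasure_unif ha
  have hmeas : MeasurableSet {u | |u + (|u + (h - a)| - a)| ≤ s} :=
    measurableSet_le (by fun_prop) measurable_const
  have hcompl : {u | s < |u + (|u + (h - a)| - a)|} = {u | |u + (|u + (h - a)| - a)| ≤ s}ᶜ := by
    ext; simp
  rcases lt_or_ge s h with hsh | hhs
  · rw [indicator_of_mem (mem_Ioi.2 hsh), hcompl, prob_compl_eq_one_sub hmeas, unif,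
      Measure.smul_apply, Measure.restrict_apply hmeas, volume_abs_coupling_sum_le hsh hh.2,
      smul_eq_mul, mul_comm, ← div_eq_mul_inv, ← ENNReal.ofReal_div_of_pos (by linarith),
      ENNReal.ofReal_sub _ (by positivity), ofReal_one]
  · have hempty : {u | |u + (|u + (h - a)| - a)| ≤ s}ᶜ ∩ Icc (-a) a = ∅ := by
      ext u
      simp only [mem_inter_iff, mem_compl_iff, mem_ofPred_eq, mem_Icc, mem_empty_iff_false, abs_le]
      grind [hh.1, hh.2]
    rw [indicator_of_notMem (notMem_Ioi.2 hhs), hcompl, unif, Measure.smul_apply,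
      Measure.restrict_apply hmeas.compl, hempty, measure_empty, smul_zero]

end Uniform

section Tail

lemma exists_isProbabilityMeasure_Ioi_eq {T : ℝ → ℝ} (hanti : AntitoneOn T (Ici 0))
    (hcont : ∀ s, 0 ≤ s → ContinuousWithinAt T (Ici s) s) (hzero : T 0 ≤ 1)
    (htop : Tendsto T atTop (𝓝 0)) :
    ∃ π : Measure ℝ, IsProbabilityMeasure π ∧ (∀ᵐ h ∂π, 0 ≤ h) ∧
      ∀ s, 0 ≤ s → π (Ioi s) = ENNReal.ofReal (T s) := by
  let F : StieltjesFunction ℝ :=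
    { toFun := (Ici 0).indicator fun s => 1 - T s
      mono' := by
        intro s t hst
        rcases lt_or_ge s 0 with hs | hs
        · rw [indicator_of_notMem (notMem_Ici.2 hs)]
          exact indicator_nonneg (fun t ht => by linarith [hanti self_mem_Ici ht ht]) t
        · have ht : t ∈ Ici (0 : ℝ) := hs.trans hst
          rw [indicator_of_mem (mem_Ici.2 hs), indicator_of_mem ht]
          linarith [hanti hs ht hst]
      right_continuous' := by
        intro s
        rcases lt_or_ge s 0 with hs | hs
        · refine ContinuousAt.continuousWithinAt (continuousAt_const (y := (0 : ℝ)) |>.congr ?_)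
          filter_upwards [Iio_mem_nhds hs] with t ht
          exact (indicator_of_notMem (notMem_Ici.2 ht) _).symm
        · exact (continuousWithinAt_const.sub (hcont s hs)).congr
            (fun t ht => indicator_of_mem (mem_Ici.2 (hs.trans ht)) _) (indicator_of_mem hs _) }
  have hF_of_neg {s : ℝ} (hs : s < 0) : F s = 0 :=
    indicator_of_notMem (notMem_Ici.2 hs) fun s => 1 - T s
  have hF_of_nonneg {s : ℝ} (hs : 0 ≤ s) : F s = 1 - T s :=
    indicator_of_mem (mem_Ici.2 hs) fun s => 1 - T s
  have hF_bot : Tendsto F atBot (𝓝 0) :=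
    tendsto_const_nhds.congr' ((eventually_lt_atBot 0).mono fun s hs => (hF_of_neg hs).symm)
  have hF_top : Tendsto F atTop (𝓝 1) := by
    have h : Tendsto (fun s => 1 - T s) atTop (𝓝 1) := by simpa using htop.const_sub 1
    exact h.congr' ((eventually_ge_atTop 0).mono fun s hs => (hF_of_nonneg hs).symm)
  refine ⟨F.measure, F.isProbabilityMeasure hF_bot hF_top, ?_, fun s hs => ?_⟩
  · have hleft : Function.leftLim F 0 = 0 :=
      leftLim_eq_of_tendsto (tendsto_const_nhds.congr'
        (eventually_nhdsWithin_of_forall fun s hs => (hF_of_neg hs).symm))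
    simpa [ae_iff, Iio_def, hleft] using F.measure_Iio hF_bot 0
  · rw [F.measure_Ioi hF_top, hF_of_nonneg hs, _root_.sub_sub_cancel]

lemma continuousWithinAt_Ici_measureReal_Iic (m : Measure ℝ) [IsProbabilityMeasure m] (s : ℝ) :
    ContinuousWithinAt (fun t => m.real (Iic t)) (Ici s) s := by
  simp_rw [← ProbabilityTheory.cdf_eq_real]
  exact (ProbabilityTheory.cdf m).right_continuous s

-- At `s = b` this relies on the convention `slope F b b = 0`.
lemma continuousWithinAt_Ici_slope {F : ℝ → ℝ} {b c s : ℝ} (hF : ContinuousWithinAt F (Ici s) s)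
    (hb : ∀ t, b ≤ t → F t = c) : ContinuousWithinAt (slope F b) (Ici s) s := by
  rcases lt_or_ge s b with hsb | hbs
  · have hinv : ContinuousWithinAt (fun t => (t - b)⁻¹) (Ici s) s :=
      ContinuousWithinAt.inv₀ (by fun_prop) (sub_ne_zero.2 hsb.ne)
    exact hinv.smul (hF.sub continuousWithinAt_const)
  · have hzero (t : ℝ) (ht : b ≤ t) : slope F b t = 0 := by
      simp [slope_def_field, hb t ht, hb b le_rfl]
    exact continuousWithinAt_const.congr (fun t ht => hzero t (hbs.trans ht)) (hzero s hbs)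

lemma antitoneOn_slope_of_concaveOn {F : ℝ → ℝ} {b c p : ℝ} (hF : ConcaveOn ℝ (Ici p) F)
    (hmono : Monotone F) (hb : ∀ t, b ≤ t → F t = c) : AntitoneOn (slope F b) (Ici p) := by
  intro s hs t ht hst
  rcases lt_or_ge t b with htb | hbt
  · exact hF.antitoneOn_slope_lt (mem_Ici.2 (le_trans ht htb.le)) ⟨hs, hst.trans_lt htb⟩
      ⟨ht, htb⟩ hst
  · have hzero : slope F b t = 0 := by simp [slope_def_field, hb t hbt, hb b le_rfl]
    rw [hzero]
    exact (hmono.monotoneOn univ).slope_nonneg (mem_univ b) (mem_univ s)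

lemma exists_measure_Ioi_eq_mul {m : Measure ℝ} [IsProbabilityMeasure m] {b : ℝ} (hb : 0 < b)
    (hmb : m (Ioi b) = 0) (hconc : ConcaveOn ℝ (Ici 0) fun s => m.real (Iic s)) :
    ∃ π : Measure ℝ, IsProbabilityMeasure π ∧ (∀ᵐ h ∂π, h ∈ Icc 0 b) ∧
      ∀ s, 0 ≤ s → m (Ioi s) = ENNReal.ofReal (1 - s / b) * π (Ioi s) := by
  set F : ℝ → ℝ := fun s => m.real (Iic s)
  have hF_one (s : ℝ) (hs : b ≤ s) : F s = 1 := by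
    have hnull : m (Iic s)ᶜ = 0 := measure_mono_null (by simpa using Ioi_subset_Ioi hs) hmb
    simp [F, Measure.real, (prob_compl_eq_zero_iff measurableSet_Iic).1 hnull]
  have hF_mono : Monotone F := fun s t hst => measureReal_mono (Iic_subset_Iic.2 hst)
  have hmul (s : ℝ) : (1 - s / b) * (b * slope F b s) = m.real (Ioi s) := by
    have h := sub_smul_slope F b s
    rw [smul_eq_mul, vsub_eq_sub, hF_one b le_rfl] at h
    rw [← compl_Iic, probReal_compl_eq_one_sub measurableSet_Iic]
    calc (1 - s / b) * (b * slope F b s) = -((s - b) * slope F b s) := by field_simp; ring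
      _ = 1 - F s := by rw [h]; ring
  obtain ⟨π, hπ, hπ_nonneg, hπ_Ioi⟩ := exists_isProbabilityMeasure_Ioi_eq
    (T := fun s => b * slope F b s)
    (fun s hs t ht hst => mul_le_mul_of_nonneg_left
      (antitoneOn_slope_of_concaveOn hconc hF_mono hF_one hs ht hst) hb.le)
    (fun s _ => continuousWithinAt_const.mul
      (continuousWithinAt_Ici_slope (continuousWithinAt_Ici_measureReal_Iic m s) hF_one))
    (by simpa using (hmul 0).trans_le measureReal_le_one)
    (tendsto_const_nhds.congr' ((eventually_ge_atTop b).mono fun s hs => by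
      simp [slope_def_field, hF_one s hs, hF_one b le_rfl]))
  refine ⟨π, hπ, ?_, fun s hs => ?_⟩
  · have hπ_le : ∀ᵐ h ∂π, h ≤ b := by
      simpa [ae_iff, Ioi_def] using hπ_Ioi b hb.le
    filter_upwards [hπ_nonneg, hπ_le] with h h₀ h₁ using ⟨h₀, h₁⟩
  · have hslope : 0 ≤ b * slope F b s :=
      mul_nonneg hb.le ((hF_mono.monotoneOn univ).slope_nonneg (mem_univ b) (mem_univ s))
    rw [hπ_Ioi s hs, ← ENNReal.ofReal_mul' hslope, hmul, ofReal_measureReal]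

lemma measureReal_lt_abs (μ : Measure ℝ) [IsFiniteMeasure μ] [μ.IsNegInvariant] {s : ℝ}
    (hs : 0 ≤ s) : μ.real {x | s < |x|} = 2 * μ.real (Ioi s) := by
  have hset : {x : ℝ | s < |x|} = Ioi s ∪ -Ioi s := by
    ext x
    simp [lt_abs, lt_neg]
  have hdisj : Disjoint (Ioi s) (-Ioi s) :=
    Set.disjoint_left.2 fun x hx hx' => by
      simp only [Set.mem_neg, mem_Ioi] at hx hx'
      linarith
  rw [hset, measureReal_union hdisj measurableSet_Ioi.neg, measureReal_def μ (-Ioi s),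
    Measure.measure_neg, ← measureReal_def, two_mul]

lemma concaveOn_measureReal_map_abs_Iic {μ : Measure ℝ} [IsProbabilityMeasure μ]
    [μ.IsNegInvariant] (hconc : ConcaveOn ℝ (Ici 0) fun s => μ.real (Iic s)) :
    ConcaveOn ℝ (Ici 0) fun s => (μ.map fun x => |x|).real (Iic s) := by
  have hcdf (s : ℝ) (hs : 0 ≤ s) :
      (μ.map fun x => |x|).real (Iic s) = 2 * μ.real (Iic s) - 1 := by
    have hprob : IsProbabilityMeasure (μ.map fun x => |x|) :=
      Measure.isProbabilityMeasure_map (by fun_prop)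
    have htail : (μ.map fun x => |x|).real (Ioi s) = 2 * μ.real (Ioi s) := by
      rw [map_measureReal_apply (by fun_prop) measurableSet_Ioi]
      exact measureReal_lt_abs μ hs
    simp only [← compl_Iic, probReal_compl_eq_one_sub measurableSet_Iic] at htail
    linarith
  exact ((hconc.smul zero_le_two).add_const (-1)).congr fun s hs => by
    simpa [sub_eq_add_neg] using (hcdf s hs).symm

lemma exists_measure_lt_abs_eq_mul {μ : Measure ℝ} [IsProbabilityMeasure μ]
    [μ.IsNegInvariant] {b : ℝ} (hb : 0 < b) (hsupp : μ (Icc (-b) b)ᶜ = 0)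
    (hconc : ConcaveOn ℝ (Ici 0) fun s => μ.real (Iic s)) :
    ∃ π : Measure ℝ, IsProbabilityMeasure π ∧ (∀ᵐ h ∂π, h ∈ Icc 0 b) ∧
      ∀ s, 0 ≤ s → μ {x | s < |x|} = ENNReal.ofReal (1 - s / b) * π (Ioi s) := by
  have hprob : IsProbabilityMeasure (μ.map fun x => |x|) :=
    Measure.isProbabilityMeasure_map (by fun_prop)
  have htail (s : ℝ) : (μ.map fun x => |x|) (Ioi s) = μ {x | s < |x|} :=
    Measure.map_apply (by fun_prop) measurableSet_Ioi
  have hsupp_abs : (μ.map fun x => |x|) (Ioi b) = 0 := by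
    rw [htail, ← hsupp]
    congr 1
    ext x
    simp [← abs_le]
  simpa only [htail] using
    exists_measure_Ioi_eq_mul hb hsupp_abs (concaveOn_measureReal_map_abs_Iic hconc)

end Tail

section Coupling

variable {a : ℝ} {π : Measure ℝ}

/-- The joint law of two uniform variables with jump law `π`: the law of `(U, |U + (h - a)| - a)`
multiplied by an independent fair sign, where `U` is uniform on `[-a, a]` and `h` has law `π`,
independently. Before the sign, the second coordinate is minus `U + h` reflected at `a`. -/
noncomputable def reflectionCoupling (a : ℝ) (π : Measure ℝ) : Measure (ℝ × ℝ) :=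
  symmetrization ((π.prod (unif a)).map fun p => (p.2, |p.2 + (p.1 - a)| - a))

lemma prod_unif_lt_abs_coupling_sum (ha : 0 < a) (hπ : ∀ᵐ h ∂π, h ∈ Icc 0 (2 * a)) {s : ℝ}
    (hs : 0 ≤ s) :
    (π.prod (unif a)) {p | s < |p.2 + (|p.2 + (p.1 - a)| - a)|} =
      ENNReal.ofReal (1 - s / (2 * a)) * π (Ioi s) := by
  have := isProbabilityMeasure_unif ha
  rw [Measure.prod_apply (measurableSet_lt measurable_const (by fun_prop)),
    ← lintegral_indicator_const measurableSet_Ioi]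
  refine lintegral_congr_ae ?_
  filter_upwards [hπ] with h hh using unif_lt_abs_coupling_sum ha hs hh

variable [IsProbabilityMeasure π]

lemma isProbabilityMeasure_reflectionCoupling (ha : 0 < a) :
    IsProbabilityMeasure (reflectionCoupling a π) := by
  have := isProbabilityMeasure_unif ha
  have : IsProbabilityMeasure ((π.prod (unif a)).map fun p => (p.2, |p.2 + (p.1 - a)| - a)) :=
    Measure.isProbabilityMeasure_map (by fun_prop)
  unfold reflectionCoupling
  infer_instance

lemma map_fst_reflectionCoupling (ha : 0 < a) :
    (reflectionCoupling a π).map Prod.fst = unif a := by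
  have := isProbabilityMeasure_unif ha
  rw [reflectionCoupling, map_symmetrization measurable_fst fun _ => rfl,
    Measure.map_map measurable_fst (by fun_prop)]
  exact symmetrization_map_prod_eq measurable_snd
    (ae_of_all _ fun _ => by simpa using symmetrization_eq_self (unif a))

lemma map_snd_reflectionCoupling (ha : 0 < a) (hπ : ∀ᵐ h ∂π, h ∈ Icc 0 (2 * a)) :
    (reflectionCoupling a π).map Prod.snd = unif a := by
  have := isProbabilityMeasure_unif ha
  rw [reflectionCoupling, map_symmetrization measurable_snd fun _ => rfl,
    Measure.map_map measurable_snd (by fun_prop)]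
  refine symmetrization_map_prod_eq (by fun_prop) ?_
  filter_upwards [hπ] with h hh
  exact symmetrization_map_abs_add_sub_unif (d := h - a) ⟨by linarith [hh.1], by linarith [hh.2]⟩

lemma map_add_reflectionCoupling (ha : 0 < a) (hπ : ∀ᵐ h ∂π, h ∈ Icc 0 (2 * a)) {μ : Measure ℝ}
    [IsProbabilityMeasure μ] [μ.IsNegInvariant]
    (hμ : ∀ s, 0 ≤ s → μ {x | s < |x|} = ENNReal.ofReal (1 - s / (2 * a)) * π (Ioi s)) :
    (reflectionCoupling a π).map (fun p => p.1 + p.2) = μ := by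
  have := isProbabilityMeasure_unif ha
  rw [reflectionCoupling, map_symmetrization (by fun_prop) fun p => (neg_add p.1 p.2).symm,
    Measure.map_map (by fun_prop) (by fun_prop), ← symmetrization_eq_self μ]
  have : IsProbabilityMeasure ((π.prod (unif a)).map
      ((fun p => p.1 + p.2) ∘ fun p : ℝ × ℝ => (p.2, |p.2 + (p.1 - a)| - a))) :=
    Measure.isProbabilityMeasure_map (by fun_prop)
  refine symmetrization_eq_of_measure_lt_abs_eq fun s hs => ?_
  rw [hμ s hs, ← prod_unif_lt_abs_coupling_sum ha hπ hs,
    Measure.map_apply (by fun_prop) (measurableSet_lt measurable_const (by fun_prop))]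
  rfl

end Coupling

/-- Every symmetric unimodal probability distribution supported in `[-2a, 2a]`
(symmetric about 0, with CDF convex on `(-∞,0]` and concave on `[0,∞)`) is the
distribution of `U₁ + U₂` for some pair of random variables each uniform on
`[-a, a]` with a suitable joint dependence. -/
theorem stmt17 (a : ℝ) (ha : 0 < a) (μ : Measure ℝ) [IsProbabilityMeasure μ]
    (hsymm : μ.map (fun x => -x) = μ)
    (hsupp : μ (Set.Icc (-(2 * a)) (2 * a))ᶜ = 0)
    (hconv : ConvexOn ℝ (Set.Iic 0) fun x => (μ (Set.Iic x)).toReal)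
    (hconc : ConcaveOn ℝ (Set.Ici 0) fun x => (μ (Set.Iic x)).toReal) :
    ∃ ν : Measure (ℝ × ℝ), IsProbabilityMeasure ν ∧
      ν.map Prod.fst = unif a ∧ ν.map Prod.snd = unif a ∧
      ν.map (fun p => p.1 + p.2) = μ := by
  have hneg : μ.IsNegInvariant := ⟨hsymm⟩
  obtain ⟨π, hπ, hπ_mem, hμ⟩ := exists_measure_lt_abs_eq_mul (by linarith) hsupp hconc
  exact ⟨reflectionCoupling a π, isProbabilityMeasure_reflectionCoupling ha,
    map_fst_reflectionCoupling ha, map_snd_reflectionCoupling ha hπ_mem,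
    map_add_reflectionCoupling ha hπ_mem hμ⟩
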